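/- Let α: I → ℝ³ be a C² unit-speed curve on a nonempty open interval I ⊆ ℝ that is rectifying with vertex p ∈ ℝ³ and satisfies α''(s) ≠ 0 for all s ∈ I. Suppose there exist a unit vector d ∈ ℝ³ and a constant c ∈ ℝ such that ⟨α(s) − p, d⟩ = c·‖α(s) − p‖ for all s ∈ I (i.e. α lies on the circular cone with vertex p and axis d). Then α is a slant helix: the function s ↦ ⟨α''(s), d⟩/‖α''(s)‖ is constant on I. -/

import Mathlib

open scoped InnerProductSpace

/-!
Write `b = α - p` and `w = b - ⟪b, α'⟫ α'`. Since `⟪b, α''⟫ = 0`, differentiating gives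
`⟪b, α'⟫' = 1` and `w' = -⟪b, α'⟫ α''`, which is orthogonal to `w`; so `‖w‖` is locally constant,
and it cannot vanish because `w = 0` near a point would force `⟪b, α'⟫ = 0` there.

The derivative of `⟪b, d⟫ = c ‖b‖` says that `y = (c / ‖b‖) b` has the same inner products as `d`
with `b` and `α'`. Hence `d - y` is orthogonal to the plane of `b` and `α'`, as is `α''`; in
dimension three it is a multiple of `α''`, and Pythagoras yields
`(⟪α'', d⟫ / ‖α''‖)² = ‖d‖² - c²`. A second derivative, `⟪α'', d⟫ = c ‖w‖² / ‖b‖³`, fixes the sign.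
-/

open Module Topology

section LinearAlgebra

theorem exists_smul_eq_of_mem_orthogonal {𝕜 E : Type*} [RCLike 𝕜] [NormedAddCommGroup E]
    [InnerProductSpace 𝕜 E] {K : Submodule 𝕜 E} (hK : finrank 𝕜 K + 1 = finrank 𝕜 E)
    {x y : E} (hx : x ∈ Kᗮ) (hx₀ : x ≠ 0) (hy : y ∈ Kᗮ) : ∃ a : 𝕜, a • x = y := by
  have : FiniteDimensional 𝕜 E := .of_finrank_pos (by lia)
  obtain ⟨a, ha⟩ := exists_smul_eq_of_finrank_eq_one
    (Submodule.finrank_add_finrank_orthogonal' hK) (x := ⟨x, hx⟩)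
    (by simpa only [ne_eq, Submodule.mk_eq_zero] using hx₀) ⟨y, hy⟩
  exact ⟨a, congrArg Subtype.val ha⟩

variable {E : Type*} [NormedAddCommGroup E] [InnerProductSpace ℝ E]

theorem sq_inner_div_norm_eq_of_mem_orthogonal {K : Submodule ℝ E}
    (hK : finrank ℝ K + 1 = finrank ℝ E) {x y d : E} (hx : x ∈ Kᗮ) (hx₀ : x ≠ 0)
    (hy : y ∈ K) (hdy : d - y ∈ Kᗮ) : (⟪x, d⟫_ℝ / ‖x‖) ^ 2 = ‖d‖ ^ 2 - ‖y‖ ^ 2 := by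
  obtain ⟨a, ha⟩ := exists_smul_eq_of_mem_orthogonal hK hx hx₀ hdy
  have hd : d = y + a • x := by rw [ha, add_sub_cancel]
  have hyx : ⟪y, x⟫_ℝ = 0 := Submodule.inner_right_of_mem_orthogonal hy hx
  have hinner : ⟪x, d⟫_ℝ = a * ‖x‖ ^ 2 := by
    rw [hd, inner_add_right, real_inner_comm, hyx, real_inner_smul_right,
      real_inner_self_eq_norm_sq, zero_add]
  have hnorm : ‖d‖ ^ 2 = ‖y‖ ^ 2 + a ^ 2 * ‖x‖ ^ 2 := by
    rw [hd, norm_add_sq_real, real_inner_smul_right, hyx, norm_smul, mul_pow, Real.norm_eq_abs,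
      sq_abs]
    ring
  have hx' : ‖x‖ ≠ 0 := norm_ne_zero_iff.2 hx₀
  rw [hinner, hnorm, pow_two ‖x‖, ← mul_assoc, mul_div_cancel_right₀ _ hx']
  ring

theorem sq_inner_div_norm_eq_of_linearIndependent_pair (hE : finrank ℝ E = 3) {t b x d : E}
    {c : ℝ} (htb : LinearIndependent ℝ ![t, b]) (hx₀ : x ≠ 0) (htx : ⟪t, x⟫_ℝ = 0)
    (hbx : ⟪b, x⟫_ℝ = 0) (hbd : ⟪b, d⟫_ℝ = c * ‖b‖) (htd : ⟪t, d⟫_ℝ = c * (⟪b, t⟫_ℝ / ‖b‖)) :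
    (⟪x, d⟫_ℝ / ‖x‖) ^ 2 = ‖d‖ ^ 2 - c ^ 2 := by
  have hb : ‖b‖ ≠ 0 := norm_ne_zero_iff.2 (htb.ne_zero 1)
  set K := Submodule.span ℝ (Set.range ![t, b])
  have hK : finrank ℝ K + 1 = finrank ℝ E := by
    rw [finrank_span_eq_card htb, hE, Fintype.card_fin]
  have mem_orthogonal {v : E} (htv : ⟪t, v⟫_ℝ = 0) (hbv : ⟪b, v⟫_ℝ = 0) : v ∈ Kᗮ := by
    rw [← Submodule.span_singleton_le_iff_mem, ← Submodule.isOrtho_iff_le, Submodule.isOrtho_comm,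
      Submodule.isOrtho_span]
    simp [htv, hbv]
  have hbK : b ∈ K := Submodule.subset_span ⟨1, rfl⟩
  have hdy : d - (c / ‖b‖) • b ∈ Kᗮ := by
    refine mem_orthogonal ?_ ?_
    · rw [inner_sub_right, real_inner_smul_right, htd, real_inner_comm]
      ring
    · rw [inner_sub_right, real_inner_smul_right, hbd, real_inner_self_eq_norm_sq]
      field_simp
      ring
  rw [sq_inner_div_norm_eq_of_mem_orthogonal hK (mem_orthogonal htx hbx) hx₀
      (K.smul_mem _ hbK) hdy, norm_smul, norm_div, norm_norm, div_mul_cancel₀ _ hb,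
    Real.norm_eq_abs, sq_abs]

end LinearAlgebra

variable {E : Type*} [NormedAddCommGroup E] [InnerProductSpace ℝ E]

section Calculus

variable {f : ℝ → E} {f' d : E} {s c : ℝ}

theorem hasDerivAt_norm (hf : HasDerivAt f f' s) (h₀ : f s ≠ 0) :
    HasDerivAt (fun t => ‖f t‖) (⟪f s, f'⟫_ℝ / ‖f s‖) s := by
  have h := hf.norm_sq.sqrt (pow_ne_zero 2 (norm_ne_zero_iff.2 h₀))
  simp only [Real.sqrt_sq (norm_nonneg _)] at h
  exact h.congr_deriv (mul_div_mul_left _ _ two_ne_zero)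

theorem inner_eq_zero_of_eventually_norm_eq (hf : HasDerivAt f f' s)
    (hc : ∀ᶠ t in 𝓝 s, ‖f t‖ = c) : ⟪f s, f'⟫_ℝ = 0 := by
  have hconst : (fun t => ‖f t‖ ^ 2) =ᶠ[𝓝 s] fun _ => c ^ 2 :=
    hc.mono fun t ht => congrArg (· ^ 2) ht
  have h := hf.norm_sq.unique ((hasDerivAt_const s _).congr_of_eventuallyEq hconst)
  linarith

theorem inner_deriv_eq_of_eventually_mem_cone (hf : HasDerivAt f f' s) (h₀ : f s ≠ 0)
    (hcone : ∀ᶠ t in 𝓝 s, ⟪f t, d⟫_ℝ = c * ‖f t‖) :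
    ⟪f', d⟫_ℝ = c * (⟪f s, f'⟫_ℝ / ‖f s‖) := by
  have hleft : HasDerivAt (fun t => ⟪f t, d⟫_ℝ) ⟪f', d⟫_ℝ s := by
    simpa only [inner_zero_right, zero_add] using hf.inner ℝ (hasDerivAt_const s d)
  exact hleft.unique (((hasDerivAt_norm hf h₀).const_mul c).congr_of_eventuallyEq hcone)

end Calculus

/-- `α` is, on the set `I`, a unit-speed rectifying curve with vertex `p`. The velocity `T` and the
acceleration `A` are carried as data, so that no derivative is a junk value of `deriv`. -/
structure IsRectifyingOn (α T A : ℝ → E) (p : E) (I : Set ℝ) : Prop where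
  hasDerivAt_curve : ∀ s ∈ I, HasDerivAt α (T s) s
  hasDerivAt_velocity : ∀ s ∈ I, HasDerivAt T (A s) s
  norm_velocity : ∀ s ∈ I, ‖T s‖ = 1
  inner_acceleration : ∀ s ∈ I, ⟪α s - p, A s⟫_ℝ = 0

/-- The part of the position vector `α - p` orthogonal to the velocity `T`, when `T` is a unit
vector. For a rectifying curve this is the component along the binormal. -/
noncomputable def binormalPart (α T : ℝ → E) (p : E) (s : ℝ) : E :=
  (α s - p) - ⟪α s - p, T s⟫_ℝ • T s

theorem norm_sq_binormalPart {α T : ℝ → E} {p : E} {s : ℝ} (hT : ‖T s‖ = 1) :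
    ‖binormalPart α T p s‖ ^ 2 = ‖α s - p‖ ^ 2 - ⟪α s - p, T s⟫_ℝ ^ 2 := by
  rw [binormalPart, norm_sub_sq_real, real_inner_smul_right, norm_smul, hT, mul_one,
    Real.norm_eq_abs, sq_abs]
  ring

namespace IsRectifyingOn

theorem of_contDiffOn {α : ℝ → E} {p : E} {I : Set ℝ} (hI : IsOpen I) (hα : ContDiffOn ℝ 2 α I)
    (hunit : ∀ s ∈ I, ‖deriv α s‖ = 1) (hrect : ∀ s ∈ I, ⟪α s - p, deriv (deriv α) s⟫_ℝ = 0) :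
    IsRectifyingOn α (deriv α) (deriv (deriv α)) p I where
  hasDerivAt_curve s hs :=
    ((hα.differentiableOn two_ne_zero).differentiableAt (hI.mem_nhds hs)).hasDerivAt
  hasDerivAt_velocity s hs := by
    have hα' : ContDiffOn ℝ 1 (deriv α) I := hα.deriv_of_isOpen hI one_add_one_eq_two.le
    exact ((hα'.differentiableOn one_ne_zero).differentiableAt (hI.mem_nhds hs)).hasDerivAt
  norm_velocity := hunit
  inner_acceleration := hrect

variable {α T A : ℝ → E} {p d : E} {I : Set ℝ} {s c : ℝ}

theorem hasDerivAt_position (h : IsRectifyingOn α T A p I) (hs : s ∈ I) :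
    HasDerivAt (fun t => α t - p) (T s) s :=
  (h.hasDerivAt_curve s hs).sub_const p

theorem inner_velocity_acceleration (h : IsRectifyingOn α T A p I) (hI : IsOpen I) (hs : s ∈ I) :
    ⟪T s, A s⟫_ℝ = 0 :=
  inner_eq_zero_of_eventually_norm_eq (h.hasDerivAt_velocity s hs)
    (Filter.eventually_of_mem (hI.mem_nhds hs) h.norm_velocity)

theorem hasDerivAt_inner_velocity (h : IsRectifyingOn α T A p I) (hs : s ∈ I) :
    HasDerivAt (fun t => ⟪α t - p, T t⟫_ℝ) 1 s := by
  refine ((h.hasDerivAt_position hs).inner ℝ (h.hasDerivAt_velocity s hs)).congr_deriv ?_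
  rw [h.inner_acceleration s hs, real_inner_self_eq_norm_sq, h.norm_velocity s hs, one_pow,
    zero_add]

theorem hasDerivAt_binormalPart (h : IsRectifyingOn α T A p I) (hs : s ∈ I) :
    HasDerivAt (binormalPart α T p) (-(⟪α s - p, T s⟫_ℝ • A s)) s := by
  refine ((h.hasDerivAt_position hs).sub
    ((h.hasDerivAt_inner_velocity hs).smul (h.hasDerivAt_velocity s hs))).congr_deriv ?_
  rw [one_smul]
  abel

theorem inner_binormalPart_acceleration (h : IsRectifyingOn α T A p I) (hI : IsOpen I)
    (hs : s ∈ I) : ⟪binormalPart α T p s, A s⟫_ℝ = 0 := by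
  rw [binormalPart, inner_sub_left, real_inner_smul_left, h.inner_acceleration s hs,
    h.inner_velocity_acceleration hI hs, mul_zero, sub_zero]

theorem hasDerivAt_norm_sq_binormalPart (h : IsRectifyingOn α T A p I) (hI : IsOpen I)
    (hs : s ∈ I) : HasDerivAt (fun t => ‖binormalPart α T p t‖ ^ 2) 0 s := by
  refine (h.hasDerivAt_binormalPart hs).norm_sq.congr_deriv ?_
  rw [inner_neg_right, real_inner_smul_right, h.inner_binormalPart_acceleration hI hs, mul_zero,
    neg_zero, mul_zero]

theorem isOpen_setOf_binormalPart_eq_zero (h : IsRectifyingOn α T A p I) (hI : IsOpen I) :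
    IsOpen {s ∈ I | binormalPart α T p s = 0} := by
  convert hI.isOpen_inter_preimage_of_deriv_eq_zero
    (fun s hs =>
      (h.hasDerivAt_norm_sq_binormalPart hI hs).differentiableAt.differentiableWithinAt)
    (fun s hs => (h.hasDerivAt_norm_sq_binormalPart hI hs).deriv) {0} using 1
  ext s
  simp

theorem binormalPart_ne_zero (h : IsRectifyingOn α T A p I) (hI : IsOpen I)
    (hA : ∀ s ∈ I, A s ≠ 0) (hs : s ∈ I) : binormalPart α T p s ≠ 0 := by
  intro hzero
  set J := {t ∈ I | binormalPart α T p t = 0}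
  have hJ : IsOpen J := h.isOpen_setOf_binormalPart_eq_zero hI
  have hinner : ∀ t ∈ J, ⟪α t - p, T t⟫_ℝ = 0 := fun t ht => by
    have hderiv := (h.hasDerivAt_binormalPart ht.1).unique <|
      (hasDerivAt_const t (0 : E)).congr_of_eventuallyEq <|
        Filter.eventually_of_mem (hJ.mem_nhds ht) fun _ hu => hu.2
    exact (smul_eq_zero.1 (neg_eq_zero.1 hderiv)).resolve_right (hA t ht.1)
  exact one_ne_zero <| (h.hasDerivAt_inner_velocity hs).unique <|
    (hasDerivAt_const s (0 : ℝ)).congr_of_eventuallyEq <|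
      Filter.eventually_of_mem (hJ.mem_nhds ⟨hs, hzero⟩) hinner

theorem linearIndependent_velocity_position (h : IsRectifyingOn α T A p I) (hI : IsOpen I)
    (hA : ∀ s ∈ I, A s ≠ 0) (hs : s ∈ I) : LinearIndependent ℝ ![T s, α s - p] := by
  have hT : ‖T s‖ = 1 := h.norm_velocity s hs
  refine (LinearIndependent.pair_iff' (norm_ne_zero_iff.1 (hT ▸ one_ne_zero))).2 fun a ha => ?_
  refine h.binormalPart_ne_zero hI hA hs ?_
  rw [binormalPart, ← ha, real_inner_smul_left, real_inner_self_eq_norm_sq, hT, one_pow, mul_one,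
    sub_self]

theorem position_ne_zero (h : IsRectifyingOn α T A p I) (hI : IsOpen I)
    (hA : ∀ s ∈ I, A s ≠ 0) (hs : s ∈ I) : α s - p ≠ 0 :=
  (h.linearIndependent_velocity_position hI hA hs).ne_zero 1

theorem inner_velocity_axis (h : IsRectifyingOn α T A p I) (hI : IsOpen I)
    (hA : ∀ s ∈ I, A s ≠ 0) (hcone : ∀ s ∈ I, ⟪α s - p, d⟫_ℝ = c * ‖α s - p‖) (hs : s ∈ I) :
    ⟪T s, d⟫_ℝ = c * (⟪α s - p, T s⟫_ℝ / ‖α s - p‖) :=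
  inner_deriv_eq_of_eventually_mem_cone (h.hasDerivAt_position hs) (h.position_ne_zero hI hA hs)
    (Filter.eventually_of_mem (hI.mem_nhds hs) hcone)

theorem inner_acceleration_axis (h : IsRectifyingOn α T A p I) (hI : IsOpen I)
    (hA : ∀ s ∈ I, A s ≠ 0) (hcone : ∀ s ∈ I, ⟪α s - p, d⟫_ℝ = c * ‖α s - p‖) (hs : s ∈ I) :
    ⟪A s, d⟫_ℝ = c * (‖binormalPart α T p s‖ ^ 2 / ‖α s - p‖ ^ 3) := by
  have hpos : α s - p ≠ 0 := h.position_ne_zero hI hA hs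
  have hnorm : ‖α s - p‖ ≠ 0 := norm_ne_zero_iff.2 hpos
  have hleft : HasDerivAt (fun t => ⟪T t, d⟫_ℝ) ⟪A s, d⟫_ℝ s := by
    simpa only [inner_zero_right, zero_add] using
      (h.hasDerivAt_velocity s hs).inner ℝ (hasDerivAt_const s d)
  have hright := ((h.hasDerivAt_inner_velocity hs).div
    (hasDerivAt_norm (h.hasDerivAt_position hs) hpos) hnorm).const_mul c
  rw [hleft.unique <| hright.congr_of_eventuallyEq <| Filter.eventually_of_mem (hI.mem_nhds hs)
      fun t ht => h.inner_velocity_axis hI hA hcone ht,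
    norm_sq_binormalPart (h.norm_velocity s hs)]
  field_simp

theorem sign_inner_acceleration_axis (h : IsRectifyingOn α T A p I) (hI : IsOpen I)
    (hA : ∀ s ∈ I, A s ≠ 0) (hcone : ∀ s ∈ I, ⟪α s - p, d⟫_ℝ = c * ‖α s - p‖) (hs : s ∈ I) :
    SignType.sign (⟪A s, d⟫_ℝ / ‖A s‖) = SignType.sign c := by
  have hw : 0 < ‖binormalPart α T p s‖ := norm_pos_iff.2 (h.binormalPart_ne_zero hI hA hs)
  have hb : 0 < ‖α s - p‖ := norm_pos_iff.2 (h.position_ne_zero hI hA hs)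
  have hA' : 0 < ‖A s‖ := norm_pos_iff.2 (hA s hs)
  have hfactor : 0 < ‖binormalPart α T p s‖ ^ 2 / ‖α s - p‖ ^ 3 / ‖A s‖ := by positivity
  rw [h.inner_acceleration_axis hI hA hcone hs, mul_div_assoc, sign_mul, sign_pos hfactor, mul_one]

end IsRectifyingOn

theorem rectifying_on_circular_cone_is_slant_helix_general (hE : finrank ℝ E = 3)
    {I : Set ℝ} (hI : IsOpen I) {α T A : ℝ → E} {p d : E} {c : ℝ}
    (h : IsRectifyingOn α T A p I) (hA : ∀ s ∈ I, A s ≠ 0)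
    (hcone : ∀ s ∈ I, ⟪α s - p, d⟫_ℝ = c * ‖α s - p‖) :
    ∀ s ∈ I, ⟪A s, d⟫_ℝ / ‖A s‖ = SignType.sign c * √(‖d‖ ^ 2 - c ^ 2) := by
  intro s hs
  have hsq : (⟪A s, d⟫_ℝ / ‖A s‖) ^ 2 = ‖d‖ ^ 2 - c ^ 2 :=
    sq_inner_div_norm_eq_of_linearIndependent_pair hE
      (h.linearIndependent_velocity_position hI hA hs) (hA s hs)
      (h.inner_velocity_acceleration hI hs) (h.inner_acceleration s hs) (hcone s hs)
      (h.inner_velocity_axis hI hA hcone hs)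
  rw [← hsq, Real.sqrt_sq_eq_abs, ← h.sign_inner_acceleration_axis hI hA hcone hs, sign_mul_abs]

/-- A C² unit-speed rectifying curve in `ℝ³` with nowhere-vanishing
acceleration that lies on a circular cone (vertex `p`, unit axis `d`, i.e.
`⟪α - p, d⟫ = c‖α - p‖`) is a slant helix: `⟪α'', d⟫/‖α''‖` is constant. -/
theorem rectifying_on_circular_cone_is_slant_helix
    (I : Set ℝ) (hIopen : IsOpen I) (hIne : I.Nonempty) (hIconv : Convex ℝ I)
    (α : ℝ → EuclideanSpace ℝ (Fin 3)) (p : EuclideanSpace ℝ (Fin 3))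
    (hC2 : ContDiffOn ℝ 2 α I)
    (hunit : ∀ s ∈ I, ‖deriv α s‖ = 1)
    (hrect : ∀ s ∈ I, ⟪α s - p, deriv (deriv α) s⟫_ℝ = 0)
    (hacc : ∀ s ∈ I, deriv (deriv α) s ≠ 0)
    (d : EuclideanSpace ℝ (Fin 3)) (hd : ‖d‖ = 1) (c : ℝ)
    (hcone : ∀ s ∈ I, ⟪α s - p, d⟫_ℝ = c * ‖α s - p‖) :
    ∃ C : ℝ, ∀ s ∈ I, ⟪deriv (deriv α) s, d⟫_ℝ / ‖deriv (deriv α) s‖ = C :=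
  ⟨_, rectifying_on_circular_cone_is_slant_helix_general finrank_euclideanSpace_fin hIopen
    (.of_contDiffOn hIopen hC2 hunit hrect) hacc hcone⟩
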